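/- arXiv:1510.02421 — 2 statements merged into one kernel-verified Lean document; each statement's English description precedes it below -/
import Mathlib

section
/- Let t ≥ 3 and n ≥ 3. Suppose either t is odd and n ≥ t, or t is even and n ≥ t/2. Then γ_P(C_t × K_n) = ⌈t/2⌉ if t ≢ 2 (mod 4), while if t ≡ 2 (mod 4) then γ_P(C_t × K_n) equals t/2 or t/2 + 1. -/
namespace PaperPD

open SimpleGraph

variable {V α β : Type*}

/-- Vertices that eventually become blue in the standard zero forcing process
starting from the blue set `B`. -/
inductive ZFClosure (G : SimpleGraph V) (B : Set V) : V → Prop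
  | init (v : V) (hv : v ∈ B) : ZFClosure G B v
  | force (u w : V) (hu : ZFClosure G B u) (huw : G.Adj u w)
      (h : ∀ x, G.Adj u x → x ≠ w → ZFClosure G B x) : ZFClosure G B w

/-- `B` is a zero forcing set of `G`. -/
def IsZeroForcingSet (G : SimpleGraph V) (B : Set V) : Prop :=
  ∀ v, ZFClosure G B v

/-- The zero forcing number `Z(G)`. -/
noncomputable def zeroForcingNumber (G : SimpleGraph V) [Fintype V] : ℕ :=
  sInf {k | ∃ B : Finset V, B.card = k ∧ IsZeroForcingSet G ↑B}

/-- Vertices that eventually become blue in the skew zero forcing process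
starting from the blue set `B` (the forcing vertex need not be blue). -/
inductive SkewZFClosure (G : SimpleGraph V) (B : Set V) : V → Prop
  | init (v : V) (hv : v ∈ B) : SkewZFClosure G B v
  | force (u w : V) (huw : G.Adj u w)
      (h : ∀ x, G.Adj u x → x ≠ w → SkewZFClosure G B x) : SkewZFClosure G B w

/-- `B` is a skew zero forcing set of `G`. -/
def IsSkewZeroForcingSet (G : SimpleGraph V) (B : Set V) : Prop :=
  ∀ v, SkewZFClosure G B v

/-- The skew zero forcing number `Z⁻(G)`. -/
noncomputable def skewZeroForcingNumber (G : SimpleGraph V) [Fintype V] : ℕ :=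
  sInf {k | ∃ B : Finset V, B.card = k ∧ IsSkewZeroForcingSet G ↑B}

/-- The closed neighborhood `N[S]` of a set of vertices. -/
def closedNbhd (G : SimpleGraph V) (S : Set V) : Set V :=
  S ∪ {v | ∃ u ∈ S, G.Adj u v}

/-- `S` is a power dominating set of `G`, i.e. `N[S]` is a zero forcing set. -/
def IsPowerDominatingSet (G : SimpleGraph V) (S : Set V) : Prop :=
  IsZeroForcingSet G (closedNbhd G S)

/-- The power domination number `γ_P(G)`. -/
noncomputable def powerDominationNumber (G : SimpleGraph V) [Fintype V] : ℕ :=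
  sInf {k | ∃ S : Finset V, S.card = k ∧ IsPowerDominatingSet G ↑S}

/-- `S` is a dominating set of `G` (`N[S] = V`). -/
def IsDominatingSet (G : SimpleGraph V) (S : Set V) : Prop :=
  ∀ v, v ∈ closedNbhd G S

/-- The domination number `γ(G)`. -/
noncomputable def dominationNumber (G : SimpleGraph V) [Fintype V] : ℕ :=
  sInf {k | ∃ S : Finset V, S.card = k ∧ IsDominatingSet G ↑S}

/-- `S` is a total dominating set of `G` (`N(S) = V`). -/
def IsTotalDominatingSet (G : SimpleGraph V) (S : Set V) : Prop :=
  ∀ v, ∃ u ∈ S, G.Adj u v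

/-- The total domination number `γ_t(G)`. -/
noncomputable def totalDominationNumber (G : SimpleGraph V) [Fintype V] : ℕ :=
  sInf {k | ∃ S : Finset V, S.card = k ∧ IsTotalDominatingSet G ↑S}

/-- The degree of a vertex. -/
noncomputable def deg (G : SimpleGraph V) (v : V) : ℕ :=
  (G.neighborSet v).ncard

/-- The maximum degree `Δ(G)`. -/
noncomputable def maxDeg (G : SimpleGraph V) [Fintype V] : ℕ :=
  Finset.univ.sup fun v => deg G v

/-- `A` is a symmetric real matrix whose off-diagonal nonzero pattern is
described by the graph `G`, i.e. `A ∈ S(G)`. -/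
def MatrixOfGraph (G : SimpleGraph V) (A : Matrix V V ℝ) : Prop :=
  A.IsSymm ∧ ∀ i j, i ≠ j → (A i j ≠ 0 ↔ G.Adj i j)

/-- The nullity of a square real matrix. -/
noncomputable def nullity [Fintype V] [DecidableEq V] (A : Matrix V V ℝ) : ℕ :=
  Fintype.card V - A.rank

/-- The maximum nullity `M(G)`. -/
noncomputable def maxNullity (G : SimpleGraph V) [Fintype V] [DecidableEq V] : ℕ :=
  sSup {k | ∃ A : Matrix V V ℝ, MatrixOfGraph G A ∧ nullity A = k}

/-- The tensor (direct) product of two simple graphs. -/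
def tensorProd (G : SimpleGraph α) (H : SimpleGraph β) : SimpleGraph (α × β) where
  Adj p q := G.Adj p.1 q.1 ∧ H.Adj p.2 q.2
  symm := ⟨fun _ _ h => ⟨h.1.symm, h.2.symm⟩⟩
  loopless := ⟨fun p h => G.loopless.irrefl p.1 h.1⟩

/-- The lexicographic product of two simple graphs. -/
def lexProd (G : SimpleGraph α) (H : SimpleGraph β) : SimpleGraph (α × β) where
  Adj p q := G.Adj p.1 q.1 ∨ (p.1 = q.1 ∧ H.Adj p.2 q.2)
  symm := ⟨fun _ _ h => h.elim (fun h' => Or.inl h'.symm) (fun h' => Or.inr ⟨h'.1.symm, h'.2.symm⟩)⟩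
  loopless := ⟨fun p h => h.elim (fun h' => G.loopless.irrefl p.1 h') (fun h' => H.loopless.irrefl p.2 h'.2)⟩

/-!
Upper bound: if `G` has maximum degree at most `2`, every vertex has a neighbor in a total
dominating set `D` and hence at most one outside it, so `D` is a skew zero forcing set, and its
copy `D × {c}` power dominates `G × K_n`. In a cycle, the vertices congruent to `0` or `1` modulo
`4` form a total dominating set.

Lower bound: let `P` be the projection to `G` of a power dominating set `S` of `G × K_n`, and `U`
the set of vertices of `G` without neighbor in `P`. Three white vertices over some `i ∈ U` would
stay white forever, so `S` has at least `n - 2` elements over each `i ∈ U`, whence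
`|P| + (n - 3)|U| ≤ |S|`. Together with `|V(G)| ≤ d|P| + |U|`, where `d` is the maximum degree, this
gives `|V(G)| ≤ d|S|` as soon as `n ≥ 4`, whatever the size of `G`. For `n = 3` it only gives
`|V(G)| ≤ (d + 1)|S|`; this leaves one vertex in `C_3 × K_3` and two vertices over antipodal points
in `C_6 × K_3`, which explicit sets closed against forcing exclude.
-/

/-- A skew fort of `G`: a nonempty set `W` such that no vertex of `G`, inside or outside `W`, has
exactly one neighbor in `W`. A zero forcing set must meet every such `W`. Ordinary forts
restrict only the vertices outside `W`. -/
def IsSkewFort (G : SimpleGraph V) (W : Set V) : Prop :=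
  W.Nonempty ∧ ∀ u, ∀ w ∈ W, G.Adj u w → ∃ x ∈ W, x ≠ w ∧ G.Adj u x

theorem IsSkewFort.exists_mem_of_isZeroForcingSet {G : SimpleGraph V} {W B : Set V}
    (hW : IsSkewFort G W) (hB : IsZeroForcingSet G B) : ∃ w ∈ W, w ∈ B := by
  by_contra! hdisj
  have hwhite : ∀ v, ZFClosure G B v → v ∉ W := by
    intro v hv
    induction hv with
    | init v hv => exact fun hvW => hdisj v hvW hv
    | force u w _ huw _ _ ih =>
      intro hwW
      obtain ⟨x, hxW, hxw, hux⟩ := hW.2 u w hwW huw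
      exact ih x hux hxw hxW
  obtain ⟨w, hw⟩ := hW.1
  exact hwhite w (hB w) hw

theorem isSkewFort_of_one_lt_degree {G : SimpleGraph V} [G.LocallyFinite] {W : Set V}
    (hdeg : ∀ v, 1 < G.degree v) (hne : W.Nonempty)
    (hW : ∀ u, ∀ w ∈ W, G.Adj u w → G.neighborSet u ⊆ W) : IsSkewFort G W := by
  refine ⟨hne, fun u w hw huw => ?_⟩
  obtain ⟨x, hx, hxw⟩ := Finset.exists_mem_ne (hdeg u) w
  rw [mem_neighborFinset] at hx
  exact ⟨x, hW u w hw huw hx, hxw, hx⟩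

theorem IsSkewFort.prod_singleton {G : SimpleGraph α} {D : Set α} (hD : IsSkewFort G D)
    (H : SimpleGraph β) (b : β) : IsSkewFort (tensorProd G H) (D ×ˢ {b}) := by
  refine ⟨hD.1.prod (Set.singleton_nonempty b), ?_⟩
  rintro ⟨k, y⟩ ⟨i, _⟩ ⟨hi, rfl⟩ ⟨hki, hyb⟩
  obtain ⟨l, hl, hli, hkl⟩ := hD.2 k i hi hki
  exact ⟨(l, _), ⟨hl, rfl⟩, fun h => hli (congrArg Prod.fst h), hkl, hyb⟩

theorem isSkewFort_singleton_prod (G : SimpleGraph α) (i : α) {A : Finset β} (hA : 2 < A.card) :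
    IsSkewFort (tensorProd G (⊤ : SimpleGraph β)) ({i} ×ˢ (A : Set β)) := by
  classical
  refine ⟨(Set.singleton_nonempty i).prod (Finset.card_pos.1 (by omega)), ?_⟩
  rintro ⟨k, y⟩ ⟨_, a⟩ ⟨rfl, -⟩ ⟨hki, -⟩
  obtain ⟨z, hzA, hz⟩ := Finset.exists_mem_notMem_of_card_lt_card
    ((Finset.card_le_two (a := y) (b := a)).trans_lt hA)
  simp only [Finset.mem_insert, Finset.mem_singleton, not_or] at hz
  exact ⟨(_, z), ⟨rfl, hzA⟩, fun h => hz.2 (congrArg Prod.snd h), hki, Ne.symm hz.1⟩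

-- The set is `D ×ˢ {a}` with its part in layer `i` replaced by the complement `{i} ×ˢ {a}ᶜ`.
theorem IsSkewFort.complement_layer [Fintype β] {G : SimpleGraph α} {D : Set α}
    (hD : IsSkewFort G D) {i : α} (hi : i ∈ D) (hβ : 2 < Fintype.card β) (a : β) :
    IsSkewFort (tensorProd G (⊤ : SimpleGraph β)) {w | w.1 ∈ D ∧ (w.1 = i ↔ w.2 ≠ a)} := by
  classical
  have exists_third (x y : β) : ∃ z, z ≠ x ∧ z ≠ y := by
    obtain ⟨z, -, hz⟩ := Finset.exists_mem_notMem_of_card_lt_card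
      ((Finset.card_le_two (a := x) (b := y)).trans_lt hβ)
    exact ⟨z, by simpa using hz⟩
  obtain ⟨x, hx, -⟩ := exists_third a a
  refine ⟨⟨(i, x), hi, by simpa using hx⟩, ?_⟩
  rintro ⟨k, y⟩ ⟨v, b⟩ ⟨hv, hvb⟩ ⟨hkv, hyb⟩
  obtain ⟨l, hl, hlv, hkl⟩ := hD.2 k v hv hkv
  by_cases hy : y = a
  · have hvi : v = i := hvb.2 fun hb => hyb (hy.trans hb.symm)
    obtain ⟨z, hza, hzb⟩ := exists_third a b
    exact ⟨(v, z), ⟨hv, by simp [hvi, hza]⟩, by simp [hzb], hkv, hy ▸ hza.symm⟩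
  · by_cases hli : l = i
    · obtain ⟨z, hza, hzy⟩ := exists_third a y
      exact ⟨(l, z), ⟨hl, by simp [hli, hza]⟩, by simp [hlv], hkl, hzy.symm⟩
    · exact ⟨(l, a), ⟨hl, by simp [hli]⟩, by simp [hlv], hkl, hy⟩

/-- The vertices of `G` with no neighbor in `D`, i.e. those not totally dominated by `D`. When `D`
is the projection of a set `S` of vertices of a tensor product, `S` dominates nothing in the layer
over such a vertex except the elements of `S` in that layer. -/
def totallyUndominated [Fintype α] (G : SimpleGraph α) [DecidableRel G.Adj] (D : Finset α) :
    Finset α :=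
  {i | ∀ k ∈ D, ¬ G.Adj k i}

theorem card_le_mul_card_add_card_totallyUndominated [Fintype α] {G : SimpleGraph α}
    [DecidableRel G.Adj] {d : ℕ} (hd : ∀ i, G.degree i ≤ d) (D : Finset α) :
    Fintype.card α ≤ d * D.card + (totallyUndominated G D).card := by
  classical
  have hcover : Finset.univ ⊆ (D.biUnion fun k => G.neighborFinset k) ∪ totallyUndominated G D := by
    intro i _
    simp only [totallyUndominated, Finset.mem_union, Finset.mem_biUnion, mem_neighborFinset,
      Finset.mem_filter_univ]
    by_contra! h
    obtain ⟨k, hk, hki⟩ := h.2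
    exact h.1 k hk hki
  calc Fintype.card α
      ≤ ((D.biUnion fun k => G.neighborFinset k) ∪ totallyUndominated G D).card :=
        Finset.card_le_card hcover
    _ ≤ (D.biUnion fun k => G.neighborFinset k).card + (totallyUndominated G D).card :=
        Finset.card_union_le _ _
    _ ≤ D.card * d + (totallyUndominated G D).card := by
        gcongr
        exact Finset.card_biUnion_le_card_mul _ _ _ fun i _ => hd i
    _ = d * D.card + (totallyUndominated G D).card := by rw [mul_comm]

theorem exists_isPowerDominatingSet_card_eq [Fintype V] (G : SimpleGraph V) :
    ∃ S : Finset V, IsPowerDominatingSet G ↑S ∧ S.card = powerDominationNumber G := by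
  have huniv : IsPowerDominatingSet G ↑(Finset.univ : Finset V) :=
    fun v => .init v (Or.inl (by simp))
  obtain ⟨S, hcard, hS⟩ : powerDominationNumber G ∈
      {k | ∃ S : Finset V, S.card = k ∧ IsPowerDominatingSet G ↑S} :=
    Nat.sInf_mem ⟨_, Finset.univ, rfl, huniv⟩
  exact ⟨S, hS, hcard⟩

section Layers

variable [Fintype α] [DecidableEq α] [Fintype β] {G : SimpleGraph α} [DecidableRel G.Adj]

theorem IsPowerDominatingSet.card_le_card_fiber_add_two {S : Finset (α × β)}
    (hS : IsPowerDominatingSet (tensorProd G (⊤ : SimpleGraph β)) ↑S) {i : α}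
    (hi : i ∈ totallyUndominated G (S.image Prod.fst)) :
    Fintype.card β ≤ (S.filter fun s => s.1 = i).card + 2 := by
  classical
  by_contra! hlt
  set A : Finset β := (S.filter fun s => s.1 = i).image Prod.snd
  have hwhite : 2 < Aᶜ.card := by
    have hAle : A.card ≤ (S.filter fun s => s.1 = i).card := Finset.card_image_le
    rw [Finset.card_compl]
    omega
  obtain ⟨⟨_, b⟩, ⟨rfl, hb⟩, hblue⟩ :=
    (isSkewFort_singleton_prod G i hwhite).exists_mem_of_isZeroForcingSet hS
  rcases hblue with hbS | ⟨s, hs, hadj⟩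
  · have hbA : b ∉ A := by simpa using hb
    exact hbA (Finset.mem_image.2 ⟨(_, b), Finset.mem_filter.2 ⟨hbS, rfl⟩, rfl⟩)
  · simp only [totallyUndominated, Finset.mem_filter_univ] at hi
    exact hi s.1 (Finset.mem_image_of_mem _ hs) hadj.1

theorem IsPowerDominatingSet.totallyUndominated_subset {S : Finset (α × β)}
    (hS : IsPowerDominatingSet (tensorProd G (⊤ : SimpleGraph β)) ↑S)
    (hβ : 2 < Fintype.card β) :
    totallyUndominated G (S.image Prod.fst) ⊆ S.image Prod.fst := by
  intro i hi
  have hfiber := hS.card_le_card_fiber_add_two hi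
  obtain ⟨s, hs⟩ := Finset.card_pos.1 (show 0 < (S.filter fun s => s.1 = i).card by omega)
  rw [Finset.mem_filter] at hs
  exact Finset.mem_image.2 ⟨s, hs⟩

theorem IsPowerDominatingSet.card_image_fst_add_le {S : Finset (α × β)}
    (hS : IsPowerDominatingSet (tensorProd G (⊤ : SimpleGraph β)) ↑S)
    {m : ℕ} (hm : m + 3 ≤ Fintype.card β) :
    (S.image Prod.fst).card + m * (totallyUndominated G (S.image Prod.fst)).card ≤ S.card := by
  set P := S.image Prod.fst
  set U := totallyUndominated G P
  have hUP : U ⊆ P := hS.totallyUndominated_subset (by omega)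
  calc P.card + m * U.card = ∑ i ∈ P, (1 + if i ∈ U then m else 0) := by
        rw [Finset.sum_add_distrib, Finset.sum_ite_mem, Finset.inter_eq_right.2 hUP]
        simp [mul_comm]
    _ ≤ ∑ i ∈ P, (S.filter fun s => s.1 = i).card := by
        refine Finset.sum_le_sum fun i hi => ?_
        split_ifs with hiU
        · have := hS.card_le_card_fiber_add_two hiU
          omega
        · obtain ⟨s, hs, rfl⟩ := Finset.mem_image.1 hi
          exact Finset.card_pos.2 ⟨s, by simp [hs]⟩
    _ = S.card := (Finset.card_eq_sum_card_image Prod.fst S).symm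

end Layers

section LowerBound

variable [Fintype α] [Fintype β] {G : SimpleGraph α} [DecidableRel G.Adj]

theorem card_le_mul_powerDominationNumber {d : ℕ} (hd : ∀ i, G.degree i ≤ d) (hd₀ : d ≠ 0)
    (hβ : 3 < Fintype.card β) :
    Fintype.card α ≤ d * powerDominationNumber (tensorProd G (⊤ : SimpleGraph β)) := by
  classical
  obtain ⟨S, hS, hcard⟩ := exists_isPowerDominatingSet_card_eq (tensorProd G (⊤ : SimpleGraph β))
  rw [← hcard]
  set P := S.image Prod.fst
  set U := totallyUndominated G P
  calc Fintype.card α ≤ d * P.card + U.card := card_le_mul_card_add_card_totallyUndominated hd P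
    _ ≤ d * P.card + d * U.card := by
        gcongr
        exact Nat.le_mul_of_pos_left _ (Nat.pos_of_ne_zero hd₀)
    _ = d * (P.card + 1 * U.card) := by ring
    _ ≤ d * S.card := by
        gcongr
        exact hS.card_image_fst_add_le hβ

theorem card_le_succ_mul_powerDominationNumber {d : ℕ} (hd : ∀ i, G.degree i ≤ d)
    (hβ : 2 < Fintype.card β) :
    Fintype.card α ≤ (d + 1) * powerDominationNumber (tensorProd G (⊤ : SimpleGraph β)) := by
  classical
  obtain ⟨S, hS, hcard⟩ := exists_isPowerDominatingSet_card_eq (tensorProd G (⊤ : SimpleGraph β))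
  rw [← hcard]
  set P := S.image Prod.fst
  calc Fintype.card α ≤ d * P.card + (totallyUndominated G P).card :=
        card_le_mul_card_add_card_totallyUndominated hd P
    _ ≤ d * P.card + P.card := by
        gcongr
        exact hS.totallyUndominated_subset hβ
    _ = (d + 1) * P.card := by ring
    _ ≤ (d + 1) * S.card := by
        gcongr
        exact Finset.card_image_le

end LowerBound

section Cycles

variable [Fintype β]

theorem IsSkewFort.not_isPowerDominatingSet_prod_singleton {G : SimpleGraph α} {D T : Set α}
    (hD : IsSkewFort G D) {i : α} (hi : i ∈ D) (hTD : ∀ k ∈ T, k ∈ D → k = i)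
    (hTi : ∀ k ∈ T, ¬ G.Adj k i) (hβ : 2 < Fintype.card β) (a : β) :
    ¬ IsPowerDominatingSet (tensorProd G (⊤ : SimpleGraph β)) (T ×ˢ {a}) := by
  intro hS
  obtain ⟨⟨v, b⟩, ⟨hv, hvb⟩, hblue⟩ :=
    (hD.complement_layer hi hβ a).exists_mem_of_isZeroForcingSet hS
  rcases hblue with ⟨hvT, hb⟩ | ⟨⟨k, _⟩, ⟨hk, rfl⟩, hkv, hab⟩
  · exact hvb.1 (hTD v hvT hv) hb
  · have hvi : v = i := hvb.2 (Ne.symm hab)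
    exact hTi k hk (hvi ▸ hkv)

theorem two_le_powerDominationNumber_cycleGraph_three (hβ : 2 < Fintype.card β) :
    2 ≤ powerDominationNumber (tensorProd (cycleGraph 3) (⊤ : SimpleGraph β)) := by
  obtain ⟨S, hS, hcard⟩ :=
    exists_isPowerDominatingSet_card_eq (tensorProd (cycleGraph 3) (⊤ : SimpleGraph β))
  have hpos := card_le_succ_mul_powerDominationNumber (G := cycleGraph 3)
    (fun _ => cycleGraph_degree_three_le.le) hβ
  rw [Fintype.card_fin] at hpos
  by_contra! hlt
  obtain ⟨⟨j, a⟩, rfl⟩ := Finset.card_eq_one.1 (show S.card = 1 by omega)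
  have hfort : IsSkewFort (cycleGraph 3) Set.univ :=
    isSkewFort_of_one_lt_degree (fun _ => by rw [cycleGraph_degree_three_le]; norm_num)
      Set.univ_nonempty fun _ _ _ _ => Set.subset_univ _
  refine hfort.not_isPowerDominatingSet_prod_singleton (Set.mem_univ j) (T := {j})
    (fun _ hk _ => hk) ?_ hβ a ?_
  · rintro _ rfl
    exact SimpleGraph.irrefl _
  · simpa only [Set.singleton_prod_singleton, Finset.coe_singleton] using hS

theorem isSkewFort_cycleGraph_six (j : Fin 6) :
    IsSkewFort (cycleGraph 6) {k | (k : ℕ) % 2 = j % 2} := by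
  refine isSkewFort_of_one_lt_degree (fun _ => by rw [cycleGraph_degree_three_le]; norm_num)
    ⟨j, rfl⟩ ?_
  revert j
  simp only [Set.subset_def, mem_neighborSet, Set.mem_ofPred_eq]
  decide

theorem not_isPowerDominatingSet_antipodal_pair (hβ : 2 < Fintype.card β) (j : Fin 6) (a b : β) :
    ¬ IsPowerDominatingSet (tensorProd (cycleGraph 6) (⊤ : SimpleGraph β))
      {(j, a), (j + 3, b)} := by
  have hanti : ∀ j : Fin 6, ((j + 3 : Fin 6) : ℕ) % 2 ≠ j % 2 := by decide
  have hfort := isSkewFort_cycleGraph_six j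
  by_cases hab : a = b
  · subst hab
    have hnadj : ∀ j : Fin 6, ¬ (cycleGraph 6).Adj (j + 3) j := by decide
    have hpair := hfort.not_isPowerDominatingSet_prod_singleton (i := j) (T := {j, j + 3}) rfl
      (by simp [hanti]) (by simp [hnadj]) hβ a
    rwa [Set.prod_singleton, Set.image_pair] at hpair
  · have hsame_parity : ∀ j v : Fin 6, (v : ℕ) % 2 = j % 2 → ¬ (cycleGraph 6).Adj j v := by decide
    intro hS
    obtain ⟨⟨v, _⟩, ⟨hv, rfl⟩, hblue⟩ :=
      (hfort.prod_singleton ⊤ b).exists_mem_of_isZeroForcingSet hS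
    rcases hblue with (h | h) | ⟨_, rfl | rfl, hadj⟩
    · exact hab (congrArg Prod.snd h).symm
    · obtain rfl : v = j + 3 := congrArg Prod.fst h
      exact hanti j hv
    · exact hsame_parity j v hv hadj.1
    · exact hadj.2 rfl

theorem three_le_powerDominationNumber_cycleGraph_six (hβ : 2 < Fintype.card β) :
    3 ≤ powerDominationNumber (tensorProd (cycleGraph 6) (⊤ : SimpleGraph β)) := by
  obtain ⟨S, hS, hcard⟩ :=
    exists_isPowerDominatingSet_card_eq (tensorProd (cycleGraph 6) (⊤ : SimpleGraph β))
  have hpos := card_le_succ_mul_powerDominationNumber (G := cycleGraph 6)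
    (fun _ => cycleGraph_degree_three_le.le) hβ
  rw [Fintype.card_fin] at hpos
  by_contra! hlt
  classical
  obtain ⟨⟨j, a⟩, ⟨k, b⟩, -, rfl⟩ := Finset.card_eq_two.1 (show S.card = 2 by omega)
  have hsub := hS.totallyUndominated_subset hβ
  have hantipodal : ∀ j k : Fin 6,
      totallyUndominated (cycleGraph 6) {j, k} ⊆ {j, k} → k = j + 3 := by decide
  simp only [Finset.image_insert, Finset.image_singleton] at hsub
  obtain rfl := hantipodal j k hsub
  exact not_isPowerDominatingSet_antipodal_pair hβ j a b (by simpa using hS)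

theorem le_two_mul_powerDominationNumber_cycleGraph {t : ℕ} (ht : 3 ≤ t)
    (hβ : 2 < Fintype.card β) (h : Fintype.card β = 3 → t = 3 ∨ t = 4 ∨ t = 6) :
    t ≤ 2 * powerDominationNumber (tensorProd (cycleGraph t) (⊤ : SimpleGraph β)) := by
  have hdeg : ∀ i, (cycleGraph t).degree i ≤ 2 := by
    obtain ⟨m, rfl⟩ := Nat.exists_eq_add_of_le' ht
    exact fun _ => cycleGraph_degree_three_le.le
  rcases Nat.lt_or_eq_of_le hβ with hβ₄ | hβ₃
  · simpa using card_le_mul_powerDominationNumber hdeg two_ne_zero hβ₄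
  · rcases h hβ₃.symm with rfl | rfl | rfl
    · have := two_le_powerDominationNumber_cycleGraph_three hβ
      omega
    · have := card_le_succ_mul_powerDominationNumber hdeg hβ
      rw [Fintype.card_fin] at this
      omega
    · have := three_le_powerDominationNumber_cycleGraph_six hβ
      omega

end Cycles

section UpperBound

theorem IsTotalDominatingSet.isSkewZeroForcingSet {G : SimpleGraph V} [G.LocallyFinite] {D : Set V}
    (hD : IsTotalDominatingSet G D) (hdeg : ∀ v, G.degree v ≤ 2) : IsSkewZeroForcingSet G D := by
  intro v
  obtain ⟨u, -, huv⟩ := hD v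
  obtain ⟨w, hw, hwu⟩ := hD u
  by_cases hwv : w = v
  · exact .init v (hwv ▸ hw)
  · refine .force u v huv fun x hux hxv => ?_
    have hxw : x = w := by
      by_contra hxw
      exact (hdeg u).not_gt <| Finset.two_lt_card.2
        ⟨v, by simpa, w, by simpa using hwu.symm, x, by simpa,
          Ne.symm hwv, Ne.symm hxv, Ne.symm hxw⟩
    exact .init x (hxw ▸ hw)

theorem IsTotalDominatingSet.isPowerDominatingSet_prod_singleton [Nontrivial β]
    {G : SimpleGraph α} {D : Set α} (hD : IsTotalDominatingSet G D)
    (hforce : IsSkewZeroForcingSet G D) (c : β) :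
    IsPowerDominatingSet (tensorProd G (⊤ : SimpleGraph β)) (D ×ˢ {c}) := by
  obtain ⟨d, hdc⟩ := exists_ne c
  have hoff (i : α) {b : β} (hb : b ≠ c) :
      (i, b) ∈ closedNbhd (tensorProd G (⊤ : SimpleGraph β)) (D ×ˢ {c}) := by
    obtain ⟨u, hu, hui⟩ := hD i
    exact Or.inr ⟨(u, c), ⟨hu, rfl⟩, hui, hb.symm⟩
  -- A force of the skew process on `G` lifts to `V(G) × {c}`, the vertex `(u, d)` being blue.
  have hon (i : α) : ZFClosure (tensorProd G (⊤ : SimpleGraph β))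
      (closedNbhd (tensorProd G (⊤ : SimpleGraph β)) (D ×ˢ {c})) (i, c) := by
    induction hforce i with
    | init v hv => exact .init _ (Or.inl ⟨hv, rfl⟩)
    | force u w huw _ ih =>
      refine .force (u, d) (w, c) (.init _ (hoff u hdc)) ⟨huw, hdc⟩ ?_
      rintro ⟨k, b⟩ ⟨huk, -⟩ hne
      by_cases hb : b = c
      · subst hb
        exact ih k huk fun hkw => hne (by rw [hkw])
      · exact .init _ (hoff k hb)
  rintro ⟨i, b⟩
  by_cases hb : b = c
  · exact hb ▸ hon i
  · exact .init _ (hoff i hb)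

theorem IsTotalDominatingSet.powerDominationNumber_le_card [Fintype α] [Fintype β] [Nontrivial β]
    {G : SimpleGraph α} [DecidableRel G.Adj] {D : Finset α} (hD : IsTotalDominatingSet G ↑D)
    (hdeg : ∀ v, G.degree v ≤ 2) :
    powerDominationNumber (tensorProd G (⊤ : SimpleGraph β)) ≤ D.card := by
  obtain ⟨c⟩ : Nonempty β := inferInstance
  have hpds := hD.isPowerDominatingSet_prod_singleton (hD.isSkewZeroForcingSet hdeg) c
  exact Nat.sInf_le ⟨D ×ˢ {c}, by simp,
    by simpa only [Finset.coe_product, Finset.coe_singleton] using hpds⟩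

theorem isTotalDominatingSet_cycleGraph (n : ℕ) :
    IsTotalDominatingSet (cycleGraph (n + 3)) {i | (i : ℕ) % 4 < 2} := by
  intro j
  by_cases hj : (j : ℕ) % 4 = 1 ∨ (j : ℕ) % 4 = 2
  · have hj₀ : j ≠ 0 := by rintro rfl; simp at hj
    refine ⟨j - 1, ?_, by simp [cycleGraph_adj]⟩
    rw [Set.mem_ofPred_eq, Fin.coe_sub_one, if_neg hj₀]
    omega
  · refine ⟨j + 1, ?_, by simp [cycleGraph_adj]⟩
    simp only [Set.mem_ofPred_eq, Fin.val_add_one]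
    split_ifs <;> omega

theorem card_filter_mod_four_lt_two (t : ℕ) :
    (Finset.univ.filter fun i : Fin t => (i : ℕ) % 4 < 2).card = 2 * (t / 4) + min (t % 4) 2 := by
  rw [Finset.card_filter, Fin.sum_univ_eq_sum_range (fun i => if i % 4 < 2 then 1 else 0)]
  induction t with
  | zero => rfl
  | succ t ih =>
    rw [Finset.sum_range_succ, ih]
    split_ifs <;> omega

theorem powerDominationNumber_cycleGraph_le {t : ℕ} (ht : 3 ≤ t) [Fintype β] [Nontrivial β] :
    powerDominationNumber (tensorProd (cycleGraph t) (⊤ : SimpleGraph β)) ≤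
      2 * (t / 4) + min (t % 4) 2 := by
  obtain ⟨m, rfl⟩ := Nat.exists_eq_add_of_le' ht
  rw [← card_filter_mod_four_lt_two]
  refine IsTotalDominatingSet.powerDominationNumber_le_card ?_ fun _ =>
    cycleGraph_degree_three_le.le
  simpa using isTotalDominatingSet_cycleGraph m

end UpperBound

theorem stmt14_general (t n : ℕ) (ht : 3 ≤ t) (hn : 3 ≤ n)
    (h : n = 3 → t = 3 ∨ t = 4 ∨ t = 6) :
    (t % 4 ≠ 2 →
      powerDominationNumber (tensorProd (cycleGraph t) (⊤ : SimpleGraph (Fin n))) = (t + 1) / 2) ∧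
    (t % 4 = 2 →
      powerDominationNumber (tensorProd (cycleGraph t) (⊤ : SimpleGraph (Fin n))) = t / 2 ∨
      powerDominationNumber (tensorProd (cycleGraph t) (⊤ : SimpleGraph (Fin n))) = t / 2 + 1) := by
  have hlower := le_two_mul_powerDominationNumber_cycleGraph (β := Fin n) ht (by simpa) (by simpa)
  have : Nontrivial (Fin n) := Fin.nontrivial_iff_two_le.2 (by omega)
  have hupper := powerDominationNumber_cycleGraph_le (β := Fin n) ht
  omega

/-- Let `t ≥ 3`, `n ≥ 3`, and suppose `t` is odd with `n ≥ t`, or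
`t` is even with `n ≥ t/2`. Then `γ_P(C_t × K_n) = ⌈t/2⌉` if `t ≢ 2 (mod 4)`, and
`γ_P(C_t × K_n) ∈ {t/2, t/2 + 1}` if `t ≡ 2 (mod 4)`. -/
theorem stmt14 (t n : ℕ) (ht : 3 ≤ t) (hn : 3 ≤ n)
    (h : (Odd t ∧ t ≤ n) ∨ (Even t ∧ t / 2 ≤ n)) :
    (t % 4 ≠ 2 →
      powerDominationNumber (tensorProd (cycleGraph t) (⊤ : SimpleGraph (Fin n))) = (t + 1) / 2) ∧
    (t % 4 = 2 →
      powerDominationNumber (tensorProd (cycleGraph t) (⊤ : SimpleGraph (Fin n))) = t / 2 ∨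
      powerDominationNumber (tensorProd (cycleGraph t) (⊤ : SimpleGraph (Fin n))) = t / 2 + 1) := by
  refine stmt14_general t n ht hn ?_
  rcases h with ⟨⟨k, rfl⟩, h⟩ | ⟨⟨k, rfl⟩, h⟩ <;> omega

end PaperPD
end

section
/- Let G be a d_G-regular graph and H a d_H-regular graph such that the lexicographic product G*H has at least one edge. If γ_P(H) = 1 and γ(G) = 1, then Z(G*H) = d_G·|V(H)| + d_H. -/
namespace PaperPD

open SimpleGraph

variable {V α β : Type*}

/-!
The smallest degree of a graph is a lower bound for its zero forcing number: the neighborhood of the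
first vertex that forces is blue except for one vertex. Conversely, let `{p}` be power dominating
and `w` a neighbor of `p`. Then `p` together with its neighbors other than `w` is a zero forcing
set with `deg p` elements, because `p` first forces `w` and after that `N[p]` is blue. So the two
bounds meet at a power dominating vertex of minimum degree.

The product `G * H` is regular, and if `g` dominates `G` and `v` power dominates `H`, then `(g, v)`
power dominates `G * H`: its closed neighborhood covers every fiber over a vertex other than `g`,
and in the fiber over `g` the forcing process of `H` started from `N[v]` can be copied, since all
neighbors outside that fiber are blue.
-/

section Forcing

variable {G : SimpleGraph V}

theorem ZFClosure.trans {B C : Set V} {v : V} (hv : ZFClosure G C v)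
    (hC : ∀ x ∈ C, ZFClosure G B x) : ZFClosure G B v := by
  induction hv with
  | init x hx => exact hC x hx
  | force u w _ huw _ ihu ihx => exact .force u w ihu huw ihx

theorem not_zfClosure_empty (v : V) : ¬ ZFClosure G ∅ v := by
  intro hv
  induction hv with
  | init _ hx => exact hx
  | force _ _ _ _ _ ihu _ => exact ihu

theorem IsPowerDominatingSet.nonempty [Nonempty V] {S : Set V} (hS : IsPowerDominatingSet G S) :
    S.Nonempty := by
  rw [Set.nonempty_iff_ne_empty]
  rintro rfl
  obtain ⟨v⟩ := ‹Nonempty V›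
  exact not_zfClosure_empty v ((hS v).trans fun x hx => by simp [closedNbhd] at hx)

theorem IsZeroForcingSet.exists_unique_adj_notMem {B : Set V} (hB : IsZeroForcingSet G B)
    (hne : B ≠ Set.univ) : ∃ u ∈ B, ∃! w, G.Adj u w ∧ w ∉ B := by
  by_contra! hstuck
  refine hne (Set.eq_univ_of_forall fun v => ?_)
  induction hB v with
  | init _ hx => exact hx
  | force u w _ huw _ ihu ihx =>
    by_contra hw
    refine hstuck u ihu ⟨w, ⟨huw, hw⟩, fun x hx => ?_⟩
    by_contra hxw
    exact hx.2 (ihx x hx.1 hxw)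

end Forcing

section Degree

variable {G : SimpleGraph V}

theorem deg_eq_degree (v : V) [Fintype (G.neighborSet v)] : deg G v = G.degree v :=
  Set.ncard_eq_toFinset_card' _

theorem deg_pos_iff_exists_adj [Finite V] {v : V} : 0 < deg G v ↔ ∃ w, G.Adj v w :=
  Set.ncard_pos

theorem IsZeroForcingSet.exists_deg_le_card [Nonempty V] {B : Finset V}
    (hB : IsZeroForcingSet G (B : Set V)) : ∃ u, deg G u ≤ B.card := by
  classical
  by_cases hne : (B : Set V) = Set.univ
  · obtain ⟨u⟩ := ‹Nonempty V›
    refine ⟨u, (Set.ncard_le_ncard ?_ B.finite_toSet).trans_eq (Set.ncard_coe_finset B)⟩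
    exact hne ▸ Set.subset_univ _
  · obtain ⟨u, hu, w, -, hw⟩ := hB.exists_unique_adj_notMem hne
    have hsub : G.neighborSet u ⊆ (insert w (B.erase u) : Finset V) := by
      intro x hx
      by_cases hxB : x ∈ B
      · exact Finset.mem_insert_of_mem (Finset.mem_erase.2 ⟨hx.ne', hxB⟩)
      · exact Finset.mem_insert.2 (.inl (hw x ⟨hx, hxB⟩))
    refine ⟨u, ?_⟩
    calc deg G u
        ≤ (insert w (B.erase u)).card :=
          (Set.ncard_le_ncard hsub (Finset.finite_toSet _)).trans_eq (Set.ncard_coe_finset _)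
      _ ≤ (B.erase u).card + 1 := Finset.card_insert_le _ _
      _ = B.card := Finset.card_erase_add_one hu

end Degree

section Bounds

variable [Fintype V] {G : SimpleGraph V}

theorem IsZeroForcingSet.zeroForcingNumber_le {B : Finset V}
    (hB : IsZeroForcingSet G (B : Set V)) : zeroForcingNumber G ≤ B.card :=
  Nat.sInf_le ⟨B, rfl, hB⟩

variable (G) in
theorem exists_isZeroForcingSet_card_eq :
    ∃ B : Finset V, B.card = zeroForcingNumber G ∧ IsZeroForcingSet G (B : Set V) :=
  Nat.sInf_mem (s := {k | ∃ B : Finset V, B.card = k ∧ IsZeroForcingSet G (B : Set V)})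
    ⟨_, Finset.univ, rfl, fun v => .init v (by simp)⟩

variable (G) in
theorem exists_deg_le_zeroForcingNumber [Nonempty V] : ∃ u, deg G u ≤ zeroForcingNumber G := by
  obtain ⟨B, hcard, hB⟩ := exists_isZeroForcingSet_card_eq G
  exact hcard ▸ hB.exists_deg_le_card

theorem IsPowerDominatingSet.zeroForcingNumber_le_sum_deg {S : Finset V}
    (hS : IsPowerDominatingSet G (S : Set V)) (hpos : ∀ s ∈ S, 0 < deg G s) :
    zeroForcingNumber G ≤ ∑ s ∈ S, deg G s := by
  classical
  choose! w hw using fun s hs => deg_pos_iff_exists_adj.1 (hpos s hs)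
  -- Each `s ∈ S` can force the neighbor `w s` that is left out here, which makes `N[S]` blue.
  let B : Finset V := S.biUnion fun s => insert s ((G.neighborFinset s).erase (w s))
  have hself : ∀ s ∈ S, s ∈ B := fun s hs =>
    Finset.mem_biUnion.2 ⟨s, hs, Finset.mem_insert_self _ _⟩
  have hother : ∀ s ∈ S, ∀ x, G.Adj s x → x ≠ w s → x ∈ B := fun s hs x hx hxw =>
    Finset.mem_biUnion.2 ⟨s, hs, by simp [hx, hxw]⟩
  have hforce : ∀ s ∈ S, ZFClosure G B (w s) := fun s hs =>
    .force s (w s) (.init s (hself s hs)) (hw s hs) fun x hx hxw => .init x (hother s hs x hx hxw)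
  have hnbhd : ∀ x ∈ closedNbhd G S, ZFClosure G B x := by
    rintro x (hx | ⟨s, hs, hsx⟩)
    · exact .init x (hself x hx)
    · by_cases hxw : x = w s
      · exact hxw ▸ hforce s hs
      · exact .init x (hother s hs x hsx hxw)
  have hB : IsZeroForcingSet G (B : Set V) := fun v => (hS v).trans hnbhd
  refine hB.zeroForcingNumber_le.trans (Finset.card_biUnion_le.trans (Finset.sum_le_sum ?_))
  intro s hs
  have hws : w s ∈ G.neighborFinset s := (G.mem_neighborFinset s _).2 (hw s hs)
  calc (insert s ((G.neighborFinset s).erase (w s))).card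
      ≤ ((G.neighborFinset s).erase (w s)).card + 1 := Finset.card_insert_le _ _
    _ = deg G s := (Finset.card_erase_add_one hws).trans (deg_eq_degree s).symm

theorem IsPowerDominatingSet.zeroForcingNumber_eq_deg {p : V} (hp : IsPowerDominatingSet G {p})
    (hpos : 0 < deg G p) (hmin : ∀ q, deg G p ≤ deg G q) : zeroForcingNumber G = deg G p := by
  have : Nonempty V := ⟨p⟩
  apply le_antisymm
  · rw [← Finset.coe_singleton] at hp
    simpa using hp.zeroForcingNumber_le_sum_deg (by simpa using hpos)
  · obtain ⟨u, hu⟩ := exists_deg_le_zeroForcingNumber G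
    exact (hmin u).trans hu

end Bounds

theorem exists_singleton_of_sInf_card_eq_one (P : Set V → Prop)
    (h : sInf {k | ∃ S : Finset V, S.card = k ∧ P S} = 1) : ∃ v, P {v} := by
  obtain ⟨S, hcard, hS⟩ := Nat.sInf_mem (Nat.nonempty_of_sInf_eq_succ h)
  obtain ⟨v, rfl⟩ := Finset.card_eq_one.1 (hcard.trans h)
  exact ⟨v, by simpa only [Finset.coe_singleton] using hS⟩

section LexProd

variable {G : SimpleGraph α} {H : SimpleGraph β}

theorem neighborSet_lexProd (p : α × β) :
    (lexProd G H).neighborSet p = G.neighborSet p.1 ×ˢ Set.univ ∪ {p.1} ×ˢ H.neighborSet p.2 := by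
  ext q
  simp [lexProd, eq_comm]

theorem deg_lexProd [Finite α] [Fintype β] (p : α × β) :
    deg (lexProd G H) p = deg G p.1 * Fintype.card β + deg H p.2 := by
  have hdisj : Disjoint (G.neighborSet p.1 ×ˢ (Set.univ : Set β))
      ({p.1} ×ˢ H.neighborSet p.2) :=
    Set.disjoint_prod.2 (.inl (by simp))
  simp only [deg, neighborSet_lexProd, Set.ncard_union_eq hdisj, Set.ncard_prod, Set.ncard_univ,
    Set.ncard_singleton, Nat.card_eq_fintype_card, one_mul]

theorem ZFClosure.lexProd_fiber {B : Set (α × β)} {C : Set β} {a : α} {b : β}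
    (hb : ZFClosure H C b) (hnbr : ∀ q : α × β, G.Adj a q.1 → ZFClosure (lexProd G H) B q)
    (hC : ∀ x ∈ C, ZFClosure (lexProd G H) B (a, x)) : ZFClosure (lexProd G H) B (a, b) := by
  induction hb with
  | init x hx => exact hC x hx
  | force u w _ huw _ ihu ihx =>
    refine .force (a, u) (a, w) ihu (.inr ⟨rfl, huw⟩) ?_
    rintro ⟨c, x⟩ (hac | ⟨rfl, hux⟩) hne
    · exact hnbr _ hac
    · exact ihx x hux fun hxw => hne (hxw ▸ rfl)

theorem IsDominatingSet.isPowerDominatingSet_lexProd {S : Set α} {T : Set β}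
    (hS : IsDominatingSet G S) (hT : IsPowerDominatingSet H T) :
    IsPowerDominatingSet (lexProd G H) (S ×ˢ T) := by
  rintro ⟨a, b⟩
  have : Nonempty β := ⟨b⟩
  obtain ⟨t, ht⟩ := hT.nonempty
  have hnbr : ∀ s ∈ S, ∀ q : α × β, G.Adj s q.1 →
      ZFClosure (lexProd G H) (closedNbhd (lexProd G H) (S ×ˢ T)) q :=
    fun s hs q hq => .init q (.inr ⟨(s, t), ⟨hs, ht⟩, .inl hq⟩)
  rcases hS a with ha | ⟨s, hs, hsa⟩
  · refine (hT b).lexProd_fiber (hnbr a ha) ?_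
    rintro x (hx | ⟨u, hu, hux⟩)
    · exact .init _ (.inl ⟨ha, hx⟩)
    · exact .init _ (.inr ⟨(a, u), ⟨ha, hu⟩, .inr ⟨rfl, hux⟩⟩)
  · exact hnbr s hs (a, b) hsa

end LexProd

/-- If `G` is `d_G`-regular, `H` is `d_H`-regular, `G*H` has an edge,
`γ_P(H) = 1`, and `γ(G) = 1`, then `Z(G*H) = d_G|V(H)| + d_H`. -/
theorem stmt17 {α β : Type*} [Fintype α] [Fintype β]
    (G : SimpleGraph α) (H : SimpleGraph β) (dG dH : ℕ)
    (hG : ∀ v, deg G v = dG) (hH : ∀ v, deg H v = dH)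
    (hE : ∃ p q, (lexProd G H).Adj p q)
    (hPDH : powerDominationNumber H = 1) (hDG : dominationNumber G = 1) :
    zeroForcingNumber (lexProd G H) = dG * Fintype.card β + dH := by
  obtain ⟨g, hg⟩ := exists_singleton_of_sInf_card_eq_one (IsDominatingSet G) hDG
  obtain ⟨v, hv⟩ := exists_singleton_of_sInf_card_eq_one (IsPowerDominatingSet H) hPDH
  have hdeg : ∀ p, deg (lexProd G H) p = dG * Fintype.card β + dH := fun p => by
    rw [deg_lexProd, hG, hH]
  have hpow : IsPowerDominatingSet (lexProd G H) {(g, v)} := by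
    simpa only [Set.singleton_prod_singleton] using hg.isPowerDominatingSet_lexProd hv
  have hpos : 0 < deg (lexProd G H) (g, v) := by
    obtain ⟨p, hp⟩ := hE
    rw [hdeg, ← hdeg p]
    exact deg_pos_iff_exists_adj.2 hp
  rw [← hdeg (g, v)]
  exact hpow.zeroForcingNumber_eq_deg hpos fun q => by rw [hdeg, hdeg]

end PaperPD
end
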